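/- Let (xₙ) and (tₙ) be the integer sequences with x₀ = 1, t₀ = 1 and xₙ₊₁ = 3xₙ + 4tₙ, tₙ₊₁ = 2xₙ + 3tₙ. Then tₙ is a perfect square (i.e., tₙ = m² for some integer m) if and only if n = 0 or n = 3. -/

import Mathlib

open Finset
open scoped Nat

/-- The rising product `(1/4)(5/4)⋯(k + 1/4)`. -/
noncomputable def risingQuarter (k : ℕ) : ℝ := ∏ j ∈ range (k + 1), ((j : ℝ) + 1 / 4)

/-- The rising product `(3/4)(7/4)⋯(m - 1/4)`. -/
noncomputable def risingThreeQuarters (m : ℕ) : ℝ := ∏ j ∈ range m, ((j : ℝ) + 3 / 4)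

/-- The coefficient of `u ^ k * v ^ m` in `padeForm`. -/
noncomputable def padeCoeff (k m : ℕ) : ℝ :=
  1 / (k ! * risingQuarter k) * (1 / (m ! * risingThreeQuarters m))

/-- The homogeneous form of degree `r` whose values at `(u, v)` and `(v, u)` give, up to a
constant, the diagonal Padé approximants of the fourth root of `u / v`. -/
noncomputable def padeForm (r : ℕ) (u v : ℂ) : ℂ :=
  ∑ p ∈ antidiagonal r, (padeCoeff p.1 p.2 : ℂ) * u ^ p.1 * v ^ p.2

/-- The factor which makes the coefficients of `padeForm r` integral. -/
noncomputable def padeScale (r : ℕ) : ℝ := 8 ^ r * risingQuarter r * risingThreeQuarters r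

lemma risingQuarter_pos (k : ℕ) : 0 < risingQuarter k :=
  prod_pos fun j _ => by positivity

lemma risingThreeQuarters_pos (m : ℕ) : 0 < risingThreeQuarters m :=
  prod_pos fun j _ => by positivity

lemma padeCoeff_pos (k m : ℕ) : 0 < padeCoeff k m := by
  have := risingQuarter_pos k
  have := risingThreeQuarters_pos m
  unfold padeCoeff
  positivity

lemma padeScale_pos (r : ℕ) : 0 < padeScale r := by
  have := risingQuarter_pos r
  have := risingThreeQuarters_pos r
  unfold padeScale
  positivity

lemma padeCoeff_succ_left (k m : ℕ) :
    ((k : ℝ) + 1) * (k + 1 + 1 / 4) * padeCoeff (k + 1) m = padeCoeff k m := by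
  have h1 := (risingQuarter_pos k).ne'
  have h2 := (risingThreeQuarters_pos m).ne'
  have h3 : risingQuarter (k + 1) = risingQuarter k * (k + 1 + 1 / 4) := by
    simp [risingQuarter, prod_range_succ _ (k + 1)]
  have h4 : ((k : ℝ) + 1 + 1 / 4) ≠ 0 := by positivity
  unfold padeCoeff
  rw [h3, Nat.factorial_succ]
  push_cast
  field_simp

lemma padeCoeff_succ_right (k m : ℕ) :
    ((m : ℝ) + 1) * (m + 1 - 1 / 4) * padeCoeff k (m + 1) = padeCoeff k m := by
  have h1 := (risingQuarter_pos k).ne'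
  have h2 := (risingThreeQuarters_pos m).ne'
  have h3 : risingThreeQuarters (m + 1) = risingThreeQuarters m * (m + 1 - 1 / 4) := by
    rw [risingThreeQuarters, prod_range_succ, risingThreeQuarters]
    ring
  have h4 : ((m : ℝ) + 1) * 4 - 1 ≠ 0 := by
    have : (0 : ℝ) ≤ m := m.cast_nonneg
    linarith
  unfold padeCoeff
  rw [h3, Nat.factorial_succ]
  push_cast
  field_simp

lemma sum_padeCoeff_shift_left (r : ℕ) (u v : ℂ) (f : ℕ → ℂ) :
    ∑ p ∈ antidiagonal (r + 1), (p.1 * (p.1 + 1 / 4) * f p.1) *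
        ((padeCoeff p.1 p.2 : ℂ) * u ^ p.1 * v ^ p.2) =
      u * ∑ p ∈ antidiagonal r, f (p.1 + 1) * ((padeCoeff p.1 p.2 : ℂ) * u ^ p.1 * v ^ p.2) := by
  rw [Finset.Nat.sum_antidiagonal_succ, mul_sum]
  simp only [Nat.cast_zero, zero_mul, zero_add]
  refine sum_congr rfl fun p _ => ?_
  rw [← padeCoeff_succ_left p.1 p.2]
  push_cast
  ring

lemma sum_padeCoeff_shift_right (r : ℕ) (u v : ℂ) (f : ℕ → ℂ) :
    ∑ p ∈ antidiagonal (r + 1), (p.2 * (p.2 - 1 / 4) * f p.1) *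
        ((padeCoeff p.1 p.2 : ℂ) * u ^ p.1 * v ^ p.2) =
      v * ∑ p ∈ antidiagonal r, f p.1 * ((padeCoeff p.1 p.2 : ℂ) * u ^ p.1 * v ^ p.2) := by
  rw [Finset.Nat.sum_antidiagonal_succ', mul_sum]
  simp only [Nat.cast_zero, zero_mul, zero_add]
  refine sum_congr rfl fun p _ => ?_
  rw [← padeCoeff_succ_right p.1 p.2]
  push_cast
  ring

/-- The form `padeForm` with its terms weighted by the exponent of `u`. -/
noncomputable def padeFormWeighted (r : ℕ) (u v : ℂ) : ℂ :=
  ∑ p ∈ antidiagonal r, (p.1 : ℂ) * ((padeCoeff p.1 p.2 : ℂ) * u ^ p.1 * v ^ p.2)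

lemma padeFormWeighted_eq (r : ℕ) (u v : ℂ) :
    2 * (r + 1) * padeFormWeighted (r + 1) u v =
      (r + 1) * (r + 1 - 1 / 4) * padeForm (r + 1) u v + (u - v) * padeForm r u v := by
  have hl := sum_padeCoeff_shift_left r u v fun _ => 1
  have hr := sum_padeCoeff_shift_right r u v fun _ => 1
  simp only [one_mul] at hl hr
  unfold padeFormWeighted padeForm
  rw [sub_mul, ← hl, ← hr, ← sub_eq_zero, mul_sum, mul_sum, ← sum_sub_distrib, ← sum_add_distrib,
    ← sum_sub_distrib]
  refine sum_eq_zero fun p hp => ?_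
  have h : (p.2 : ℂ) = r + 1 - p.1 := by
    rw [HasAntidiagonal.mem_antidiagonal] at hp
    rw [eq_sub_iff_add_eq, add_comm]
    exact_mod_cast hp
  rw [h]
  ring

lemma padeFormWeighted_succ (r : ℕ) (u v : ℂ) :
    (r + 1) * (r + 1 + 1 / 4) * padeFormWeighted (r + 1) u v =
      (2 * r + 1) * u * padeForm r u v - (u - v) * padeFormWeighted r u v := by
  have hl := sum_padeCoeff_shift_left r u v fun _ => 1
  have hl' := sum_padeCoeff_shift_left r u v fun k => k
  have hr := sum_padeCoeff_shift_right r u v fun k => k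
  simp only [one_mul, Nat.cast_add, Nat.cast_one, add_mul, sum_add_distrib] at hl hl' hr
  unfold padeFormWeighted padeForm
  have key : (r + 1) * (r + 1 + 1 / 4) *
      (∑ p ∈ antidiagonal (r + 1), (p.1 : ℂ) * ((padeCoeff p.1 p.2 : ℂ) * u ^ p.1 * v ^ p.2)) =
      2 * (r + 1) * (∑ p ∈ antidiagonal (r + 1), (p.1 * (p.1 + 1 / 4) * 1) *
        ((padeCoeff p.1 p.2 : ℂ) * u ^ p.1 * v ^ p.2)) -
      (∑ p ∈ antidiagonal (r + 1), (p.1 * (p.1 + 1 / 4) * p.1) *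
        ((padeCoeff p.1 p.2 : ℂ) * u ^ p.1 * v ^ p.2)) +
      ∑ p ∈ antidiagonal (r + 1), (p.2 * (p.2 - 1 / 4) * p.1) *
        ((padeCoeff p.1 p.2 : ℂ) * u ^ p.1 * v ^ p.2) := by
    rw [mul_sum, mul_sum, ← sum_sub_distrib, ← sum_add_distrib]
    refine sum_congr rfl fun p hp => ?_
    have h : (p.2 : ℂ) = r + 1 - p.1 := by
      rw [HasAntidiagonal.mem_antidiagonal] at hp
      rw [eq_sub_iff_add_eq, add_comm]
      exact_mod_cast hp
    rw [h]
    ring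
  rw [key, hr, sum_padeCoeff_shift_left r u v fun k => (k : ℂ),
    sum_padeCoeff_shift_left r u v fun _ => (1 : ℂ)]
  simp only [one_mul, Nat.cast_add, Nat.cast_one, add_mul, sum_add_distrib]
  ring

lemma padeForm_recurrence (n : ℕ) (u v : ℂ) :
    (n + 2) * (n + 1) * ((n + 2) ^ 2 - 1 / 16) * padeForm (n + 2) u v =
      -(u - v) ^ 2 * padeForm n u v + (2 * n + 3) * (n + 1) * (u + v) * padeForm (n + 1) u v := by
  have h1 := padeFormWeighted_eq n u v
  have h2 := padeFormWeighted_eq (n + 1) u v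
  have h3 := padeFormWeighted_succ (n + 1) u v
  push_cast at h1 h2 h3
  linear_combination (-(n + 1) * (n + 1 + 1 + 1 / 4)) * h2 + 2 * (n + 1) * h3 - (u - v) * h1

lemma padeForm_zero (u v : ℂ) : padeForm 0 u v = 4 := by
  simp [padeForm, padeCoeff, risingQuarter, risingThreeQuarters]

lemma padeForm_one (u v : ℂ) : padeForm 1 u v = 16 / 5 * u + 16 / 3 * v := by
  simp [padeForm, padeCoeff, risingQuarter, risingThreeQuarters, Finset.Nat.antidiagonal_succ,
    prod_range_succ]
  ring

lemma padeScale_zero : padeScale 0 = 1 / 4 := by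
  simp [padeScale, risingQuarter, risingThreeQuarters]

lemma padeScale_succ (r : ℕ) :
    padeScale (r + 1) = 8 * (((r : ℝ) + 1) ^ 2 - 1 / 16) * padeScale r := by
  simp only [padeScale, risingQuarter, risingThreeQuarters, prod_range_succ _ (r + 1),
    prod_range_succ _ r]
  push_cast
  ring

lemma padeScale_le (r : ℕ) : padeScale r ≤ 8 ^ r / 4 * (r ! : ℝ) ^ 2 := by
  induction r with
  | zero => simp [padeScale_zero]
  | succ r ih =>
    rw [padeScale_succ, Nat.factorial_succ]
    push_cast
    calc 8 * (((r : ℝ) + 1) ^ 2 - 1 / 16) * padeScale r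
        ≤ 8 * ((r : ℝ) + 1) ^ 2 * padeScale r := by
          have := padeScale_pos r
          nlinarith
      _ ≤ 8 * ((r : ℝ) + 1) ^ 2 * (8 ^ r / 4 * (r ! : ℝ) ^ 2) := by gcongr
      _ = _ := by ring

lemma padeForm_one_one_succ (r : ℕ) :
    ((r : ℂ) + 1) * ((r + 1) ^ 2 - 1 / 16) * padeForm (r + 1) 1 1 =
      2 * (2 * r + 1) * padeForm r 1 1 := by
  cases r with
  | zero => 
    rw [padeForm_one, padeForm_zero]
    norm_num
  | succ n =>
    have h := padeForm_recurrence n 1 1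
    have hn : (n : ℂ) + 1 ≠ 0 := by exact_mod_cast n.succ_ne_zero
    push_cast
    apply mul_left_cancel₀ hn
    linear_combination h

lemma sum_padeCoeff_succ (r : ℕ) :
    ((r : ℝ) + 1) * ((r + 1) ^ 2 - 1 / 16) * ∑ p ∈ antidiagonal (r + 1), padeCoeff p.1 p.2 =
      2 * (2 * r + 1) * ∑ p ∈ antidiagonal r, padeCoeff p.1 p.2 := by
  have h := padeForm_one_one_succ r
  simp only [padeForm, one_pow, mul_one] at h
  apply Complex.ofReal_injective
  push_cast
  exact h

lemma padeScale_mul_sum_le (r : ℕ) :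
    padeScale r * ∑ p ∈ antidiagonal r, padeCoeff p.1 p.2 ≤ 32 ^ r := by
  induction r with
  | zero => simp [padeScale_zero, padeCoeff, risingQuarter, risingThreeQuarters]
  | succ r ih =>
    have h := sum_padeCoeff_succ r
    rw [padeScale_succ]
    have hr : (0 : ℝ) < r + 1 := by positivity
    have hS : 0 ≤ padeScale r * ∑ p ∈ antidiagonal r, padeCoeff p.1 p.2 :=
      mul_nonneg (padeScale_pos r).le (sum_nonneg fun p _ => (padeCoeff_pos _ _).le)
    refine le_of_mul_le_mul_left ?_ hr
    calc _ = 8 * padeScale r * (((r : ℝ) + 1) * ((r + 1) ^ 2 - 1 / 16) *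
          ∑ p ∈ antidiagonal (r + 1), padeCoeff p.1 p.2) := by ring
      _ = 16 * (2 * r + 1) * (padeScale r * ∑ p ∈ antidiagonal r, padeCoeff p.1 p.2) := by
          rw [h]; ring
      _ ≤ 32 * (r + 1) * (padeScale r * ∑ p ∈ antidiagonal r, padeCoeff p.1 p.2) := by
          nlinarith
      _ ≤ 32 * (r + 1) * 32 ^ r := by gcongr
      _ = _ := by ring

lemma norm_padeScale_mul_padeForm_le (r : ℕ) {u v : ℂ} {R : ℝ} (hu : ‖u‖ = R) (hv : ‖v‖ = R) :
    ‖padeScale r * padeForm r u v‖ ≤ (32 * R) ^ r := by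
  have hR : 0 ≤ R := hu ▸ norm_nonneg u
  have h : ‖padeForm r u v‖ ≤ (∑ p ∈ antidiagonal r, padeCoeff p.1 p.2) * R ^ r := by
    rw [padeForm, sum_mul]
    refine norm_sum_le_of_le _ fun p hp => ?_
    rw [norm_mul, norm_mul, norm_pow, norm_pow, hu, hv, Complex.norm_real, Real.norm_eq_abs,
      abs_of_pos (padeCoeff_pos _ _), mul_assoc, ← pow_add, mem_antidiagonal.mp hp]
  rw [norm_mul, Complex.norm_real, Real.norm_eq_abs, abs_of_pos (padeScale_pos r), mul_pow]
  calc _ ≤ padeScale r * ((∑ p ∈ antidiagonal r, padeCoeff p.1 p.2) * R ^ r) := by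
        gcongr
        exact (padeScale_pos r).le
    _ = (padeScale r * ∑ p ∈ antidiagonal r, padeCoeff p.1 p.2) * R ^ r := by ring
    _ ≤ _ := by
        gcongr
        exact padeScale_mul_sum_le r

lemma factorial_dvd_two_pow_mul_prod (c k : ℕ) :
    k ! ∣ 2 ^ k * ∏ i ∈ range k, (c + 4 * i) := by
  obtain ⟨e, o, ho, hk⟩ := Nat.exists_eq_two_pow_mul_odd (Nat.factorial_ne_zero k)
  rw [hk]
  refine mul_dvd_mul (pow_dvd_pow 2 ?_) ?_
  · rcases eq_or_ne k 0 with rfl | hk0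
    · have : (2 ^ e : ℕ) ∣ 1 := ⟨o, by simpa using hk⟩
      simpa using this
    · have h1 : (e : ℕ∞) ≤ emultiplicity 2 k ! := le_emultiplicity_of_pow_dvd ⟨o, hk⟩
      exact_mod_cast (h1.trans_lt (Nat.emultiplicity_two_factorial_lt hk0)).le
  · have hcop : Nat.Coprime 4 o := by
      have := (Nat.coprime_two_left.mpr ho).pow_left 2
      simpa using this
    rcases Nat.lt_or_ge 1 o with ho1 | ho1
    · obtain ⟨d, hd⟩ := Nat.exists_mul_mod_eq_one_of_coprime hcop ho1
      have hd' : 4 * d ≡ 1 [MOD o] := by rw [Nat.ModEq, hd.2, Nat.mod_eq_of_lt ho1]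
      have hdo : Nat.Coprime o d := by
        have : Nat.gcd (4 * d) o = 1 := by rw [hd'.gcd_eq]; simp
        exact (Nat.Coprime.coprime_mul_left this).symm
      have h1 : ∏ i ∈ range k, (d * (c + 4 * i)) ≡ ∏ i ∈ range k, (d * c + i) [MOD o] := by
        refine Nat.ModEq.prod fun i _ => ?_
        have := (hd'.mul_right i).add_left (d * c)
        convert this using 1 <;> ring
      have h2 : o ∣ ∏ i ∈ range k, (d * c + i) := by
        rw [← Nat.ascFactorial_eq_prod_range]
        exact (Dvd.intro_left _ hk.symm).trans (Nat.factorial_dvd_ascFactorial _ _)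
      have h3 := (h1.dvd_iff dvd_rfl).mpr h2
      rw [prod_mul_distrib, prod_const] at h3
      exact (hdo.pow_right _).dvd_of_dvd_mul_left h3
    · have : o = 1 := by
        have := ho.pos
        omega
      simp [this]

lemma padeScale_mul_padeCoeff_eq_natCast (k m : ℕ) :
    ∃ c : ℕ, padeScale (k + m) * padeCoeff k m = c := by
  obtain ⟨a, ha⟩ := factorial_dvd_two_pow_mul_prod (4 * m + 3) k
  obtain ⟨b, hb⟩ := factorial_dvd_two_pow_mul_prod (4 * k + 5) m
  refine ⟨a * b, ?_⟩
  have hX : risingQuarter (k + m) * 4 ^ m =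
      risingQuarter k * ∏ i ∈ range m, ((4 * k + 5 + 4 * i : ℕ) : ℝ) := by
    rw [risingQuarter, risingQuarter, add_right_comm, prod_range_add, mul_assoc]
    congr 1
    rw [← card_range m, ← prod_const, card_range, ← prod_mul_distrib]
    refine prod_congr rfl fun i _ => ?_
    push_cast
    ring
  have hY : risingThreeQuarters (k + m) * 4 ^ k =
      risingThreeQuarters m * ∏ i ∈ range k, ((4 * m + 3 + 4 * i : ℕ) : ℝ) := by
    rw [add_comm, risingThreeQuarters, risingThreeQuarters, prod_range_add, mul_assoc]
    congr 1
    rw [← card_range k, ← prod_const, card_range, ← prod_mul_distrib]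
    refine prod_congr rfl fun i _ => ?_
    push_cast
    ring
  have ha' : (2 : ℝ) ^ k * ∏ i ∈ range k, ((4 * m + 3 + 4 * i : ℕ) : ℝ) = k ! * a := by
    exact_mod_cast ha
  have hb' : (2 : ℝ) ^ m * ∏ i ∈ range m, ((4 * k + 5 + 4 * i : ℕ) : ℝ) = m ! * b := by
    exact_mod_cast hb
  have h1 := (risingQuarter_pos k).ne'
  have h2 := (risingThreeQuarters_pos m).ne'
  have h8 : (8 : ℝ) ^ (k + m) = 2 ^ k * 2 ^ m * (4 ^ m * 4 ^ k) := by
    rw [show (8 : ℝ) = 2 * 4 by norm_num, mul_pow, pow_add, pow_add]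
    ring
  unfold padeScale padeCoeff
  rw [h8]
  push_cast
  field_simp
  calc _ = 2 ^ k * 2 ^ m * (risingQuarter (k + m) * 4 ^ m) *
        (risingThreeQuarters (k + m) * 4 ^ k) := by ring
    _ = risingQuarter k * risingThreeQuarters m *
        (2 ^ k * ∏ i ∈ range k, ((4 * m + 3 + 4 * i : ℕ) : ℝ)) *
        (2 ^ m * ∏ i ∈ range m, ((4 * k + 5 + 4 * i : ℕ) : ℝ)) := by rw [hX, hY]; ring
    _ = _ := by rw [ha', hb']; ring

lemma padeScale_mul_padeForm_mem (r : ℕ) {u v : ℂ} (hu : u ∈ GaussianInt.toComplex.range)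
    (hv : v ∈ GaussianInt.toComplex.range) :
    padeScale r * padeForm r u v ∈ GaussianInt.toComplex.range := by
  rw [padeForm, mul_sum]
  refine sum_mem fun p hp => ?_
  obtain ⟨c, hc⟩ := padeScale_mul_padeCoeff_eq_natCast p.1 p.2
  rw [mem_antidiagonal.mp hp] at hc
  have : (padeScale r : ℂ) * ((padeCoeff p.1 p.2 : ℂ) * u ^ p.1 * v ^ p.2) =
      (c : ℂ) * u ^ p.1 * v ^ p.2 := by
    rw [← mul_assoc, ← mul_assoc, ← Complex.ofReal_mul, hc, Complex.ofReal_natCast]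
  rw [this]
  exact mul_mem (mul_mem (natCast_mem _ c) (pow_mem hu _)) (pow_mem hv _)

/-- The integral whose values are the errors of the diagonal Padé approximants. -/
noncomputable def padeError (h : ℝ) (r : ℕ) : ℝ :=
  ∫ s in (-h)..h, (2 * Real.cos s - 2 * Real.cos h) ^ r * Real.cos (s / 4)

lemma intervalIntegrable_padeError (h : ℝ) (r : ℕ) (c : ℝ) :
    IntervalIntegrable
      (fun s => c * ((2 * Real.cos s - 2 * Real.cos h) ^ r * Real.cos (s / 4)))
      MeasureTheory.volume (-h) h :=
  Continuous.intervalIntegrable (by fun_prop) _ _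

lemma hasDerivAt_cos_div_four (s : ℝ) :
    HasDerivAt (fun s => Real.cos (s / 4)) (-Real.sin (s / 4) * (1 / 4)) s :=
  ((hasDerivAt_id s).div_const 4).cos

lemma hasDerivAt_sin_div_four (s : ℝ) :
    HasDerivAt (fun s => Real.sin (s / 4)) (Real.cos (s / 4) * (1 / 4)) s :=
  ((hasDerivAt_id s).div_const 4).sin

lemma hasDerivAt_two_cos_sub (h s : ℝ) :
    HasDerivAt (fun s => 2 * Real.cos s - 2 * Real.cos h) (2 * -Real.sin s) s :=
  ((Real.hasDerivAt_cos s).const_mul 2).sub_const _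

lemma padeError_recurrence (h : ℝ) (n : ℕ) :
    (((n : ℝ) + 2) ^ 2 - 1 / 16) * padeError h (n + 2) =
      (n + 2) * (n + 1) * (4 * Real.sin h ^ 2) * padeError h n -
        (n + 2) * (2 * n + 3) * (2 * Real.cos h) * padeError h (n + 1) := by
  set G : ℝ → ℝ := fun s => 2 * Real.cos s - 2 * Real.cos h with hG
  have hder : ∀ s, HasDerivAt
      (fun s => (n + 2) * G s ^ (n + 1) * (2 * -Real.sin s) * Real.cos (s / 4) +
        G s ^ (n + 2) * (1 / 4 * Real.sin (s / 4)))
      ((n + 2) * (n + 1) * (4 * Real.sin h ^ 2) * (G s ^ n * Real.cos (s / 4)) -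
        (n + 2) * (2 * n + 3) * (2 * Real.cos h) * (G s ^ (n + 1) * Real.cos (s / 4)) -
        (((n : ℝ) + 2) ^ 2 - 1 / 16) * (G s ^ (n + 2) * Real.cos (s / 4))) s := by
    intro s
    have hg := hasDerivAt_two_cos_sub h s
    have h1 := ((((hg.pow (n + 1)).const_mul ((n : ℝ) + 2)).mul
      ((Real.hasDerivAt_sin s).neg.const_mul 2)).mul (hasDerivAt_cos_div_four s)).add
      ((hg.pow (n + 2)).mul ((hasDerivAt_sin_div_four s).const_mul (1 / 4)))
    refine h1.congr_deriv ?_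
    have e1 : Real.cos s = (G s + 2 * Real.cos h) / 2 := by simp only [hG]; ring
    have e2 : Real.sin s ^ 2 = 1 - ((G s + 2 * Real.cos h) / 2) ^ 2 := by
      rw [← e1, Real.sin_sq]
    simp only [Pi.pow_apply, Pi.mul_apply, Pi.neg_apply, Nat.add_sub_cancel,
      show n + 2 - 1 = n + 1 from rfl]
    rw [show 2 * Real.cos s - 2 * Real.cos h = G s from rfl, Real.sin_sq h]
    push_cast
    rw [e1]
    linear_combination (4 * ((n : ℝ) + 2) * (n + 1) * G s ^ n * Real.cos (s / 4)) * e2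
  have hval := intervalIntegral.integral_eq_sub_of_hasDerivAt (a := -h) (b := h)
    (fun s _ => hder s) (Continuous.intervalIntegrable (by fun_prop) _ _)
  rw [intervalIntegral.integral_sub, intervalIntegral.integral_sub,
    intervalIntegral.integral_const_mul, intervalIntegral.integral_const_mul,
    intervalIntegral.integral_const_mul] at hval
  · have hz : G h = 0 := by simp [hG]
    have hz' : G (-h) = 0 := by simp [hG]
    simp only [hz, hz', pow_succ, mul_zero, zero_mul, add_zero, sub_zero] at hval
    unfold padeError
    simp only [← pow_succ] at hval
    linarith
  · exact intervalIntegrable_padeError h n _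
  · exact intervalIntegrable_padeError h (n + 1) _
  · exact (intervalIntegrable_padeError h n _).sub (intervalIntegrable_padeError h (n + 1) _)
  · exact intervalIntegrable_padeError h (n + 2) _

lemma padeError_zero (h : ℝ) : padeError h 0 = 8 * Real.sin (h / 4) := by
  have hval := intervalIntegral.integral_eq_sub_of_hasDerivAt (a := -h) (b := h)
    (fun s _ => (hasDerivAt_sin_div_four s).const_mul 4)
    (Continuous.intervalIntegrable (by fun_prop) _ _)
  rw [neg_div, Real.sin_neg] at hval
  unfold padeError
  calc _ = ∫ s in (-h)..h, 4 * (Real.cos (s / 4) * (1 / 4)) := by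
        congr 1; ext s; ring
    _ = _ := by rw [hval]; ring

lemma padeError_one (h : ℝ) :
    15 / 16 * padeError h 1 =
      4 * Real.sin h * Real.cos (h / 4) - 2 * Real.cos h * padeError h 0 := by
  have hder : ∀ s, HasDerivAt
      (fun s => 2 * -Real.sin s * Real.cos (s / 4) +
        (2 * Real.cos s - 2 * Real.cos h) * (1 / 4 * Real.sin (s / 4)))
      ((-(15 / 16)) * ((2 * Real.cos s - 2 * Real.cos h) ^ 1 * Real.cos (s / 4)) -
        2 * Real.cos h * ((2 * Real.cos s - 2 * Real.cos h) ^ 0 * Real.cos (s / 4))) s := by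
    intro s
    have h1 := (((Real.hasDerivAt_sin s).neg.const_mul 2).mul (hasDerivAt_cos_div_four s)).add
      ((hasDerivAt_two_cos_sub h s).mul ((hasDerivAt_sin_div_four s).const_mul (1 / 4)))
    refine h1.congr_deriv ?_
    simp only [Pi.neg_apply]
    ring
  have hval := intervalIntegral.integral_eq_sub_of_hasDerivAt (a := -h) (b := h)
    (fun s _ => hder s) (Continuous.intervalIntegrable (by fun_prop) _ _)
  rw [intervalIntegral.integral_sub, intervalIntegral.integral_const_mul,
    intervalIntegral.integral_const_mul] at hval
  · simp only [neg_div, Real.sin_neg, Real.cos_neg] at hval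
    unfold padeError
    linarith
  · exact intervalIntegrable_padeError h 1 _
  · exact intervalIntegrable_padeError h 0 _

lemma abs_padeError_le {h : ℝ} (h0 : 0 ≤ h) (hπ : h ≤ Real.pi) (r : ℕ) :
    |padeError h r| ≤ (2 - 2 * Real.cos h) ^ r * (2 * h) := by
  have := intervalIntegral.norm_integral_le_of_norm_le_const (a := -h) (b := h)
    (f := fun s => (2 * Real.cos s - 2 * Real.cos h) ^ r * Real.cos (s / 4))
    (C := (2 - 2 * Real.cos h) ^ r) fun s hs => by
      rw [Set.uIoc_of_le (by linarith)] at hs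
      have h1 : Real.cos h ≤ Real.cos s := by
        rw [← Real.cos_abs s]
        exact Real.cos_le_cos_of_nonneg_of_le_pi (abs_nonneg s) hπ
          (abs_le.mpr ⟨hs.1.le, hs.2⟩)
      have h2 := Real.cos_le_one s
      rw [norm_mul, norm_pow, Real.norm_eq_abs, Real.norm_eq_abs, abs_of_nonneg (by linarith)]
      calc _ ≤ (2 - 2 * Real.cos h) ^ r * 1 := by
            gcongr
            · exact pow_nonneg (by linarith) r
            · linarith
            · linarith
            · exact Real.abs_cos_le_one _
        _ = _ := mul_one _
  rw [show h - -h = 2 * h by ring, abs_of_nonneg (by linarith : 0 ≤ 2 * h)] at this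
  exact this

lemma arctan_le_self {x : ℝ} (hx : 0 ≤ x) : Real.arctan x ≤ x := by
  conv_rhs => rw [← Real.tan_arctan x]
  exact Real.le_tan (Real.arctan_nonneg.mpr hx) (Real.arctan_lt_pi_div_two x)

lemma sqrt_one_add_inv_sq {x : ℝ} (hx : 0 < x) : √(1 + (1 / x) ^ 2) = √(x ^ 2 + 1) / x := by
  rw [show 1 + (1 / x) ^ 2 = (x ^ 2 + 1) / x ^ 2 by field_simp, Real.sqrt_div (by positivity),
    Real.sqrt_sq hx.le]

lemma cos_arctan_inv_mul_sqrt {x : ℝ} (hx : 0 < x) :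
    Real.cos (Real.arctan (1 / x)) * √(x ^ 2 + 1) = x := by
  have h2 : √(x ^ 2 + 1) ≠ 0 := by positivity
  rw [Real.cos_arctan, sqrt_one_add_inv_sq hx]
  field_simp

lemma sin_arctan_inv_mul_sqrt {x : ℝ} (hx : 0 < x) :
    Real.sin (Real.arctan (1 / x)) * √(x ^ 2 + 1) = 1 := by
  have h2 : √(x ^ 2 + 1) ≠ 0 := by positivity
  rw [Real.sin_arctan, sqrt_one_add_inv_sq hx]
  field_simp

/-- The imaginary parts of the multiples of the approximants at `239 + i` satisfy a recurrence
with real coefficients. -/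
lemma im_mul_padeForm_recurrence (γ : ℂ) (n : ℕ) :
    ((n : ℝ) + 2) * (n + 1) * ((n + 2) ^ 2 - 1 / 16) *
        (γ * padeForm (n + 2) (239 + Complex.I) (239 - Complex.I)).im =
      4 * (γ * padeForm n (239 + Complex.I) (239 - Complex.I)).im + (2 * n + 3) * (n + 1) * 478 *
        (γ * padeForm (n + 1) (239 + Complex.I) (239 - Complex.I)).im := by
  have h := padeForm_recurrence n (239 + Complex.I) (239 - Complex.I)
  have h' : ((((n : ℝ) + 2) * (n + 1) * ((n + 2) ^ 2 - 1 / 16) : ℝ) : ℂ) *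
        (γ * padeForm (n + 2) (239 + Complex.I) (239 - Complex.I)) =
      ((4 : ℝ) : ℂ) * (γ * padeForm n (239 + Complex.I) (239 - Complex.I)) +
        (((2 * n + 3) * (n + 1) * 478 : ℝ) : ℂ) *
        (γ * padeForm (n + 1) (239 + Complex.I) (239 - Complex.I)) := by
    push_cast
    linear_combination γ * h - (4 * γ * padeForm n (239 + Complex.I) (239 - Complex.I)) *
      Complex.I_sq
  have := congrArg Complex.im h'
  rwa [Complex.im_ofReal_mul, Complex.add_im, Complex.im_ofReal_mul, Complex.im_ofReal_mul] at this

lemma exists_im_mul_padeForm_ne_zero {γ : ℂ} (hγ : γ ≠ 0) (n : ℕ) :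
    (γ * padeForm n (239 + Complex.I) (239 - Complex.I)).im ≠ 0 ∨
      (γ * padeForm (n + 1) (239 + Complex.I) (239 - Complex.I)).im ≠ 0 := by
  induction n with
  | zero =>
    by_contra! H
    obtain ⟨h0, h1⟩ := H
    rw [padeForm_zero] at h0
    rw [zero_add, padeForm_one] at h1
    simp at h0 h1
    norm_num [h0] at h1
    exact hγ (Complex.ext h1 h0)
  | succ n ih =>
    by_contra! H
    have h := im_mul_padeForm_recurrence γ n
    rw [H.1, show n + 2 = n + 1 + 1 from rfl, H.2] at h
    rcases ih with ih | ih
    · apply ih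
      linarith
    · exact ih H.1

lemma exp_mul_padeForm_im (r : ℕ) :
    (Complex.exp (Real.arctan (1 / 239) / 4 * Complex.I) *
        padeForm r (239 + Complex.I) (239 - Complex.I)).im * (2 * (r ! : ℝ) ^ 2) =
      (-√57122) ^ r * padeError (Real.arctan (1 / 239)) r := by
  set h := Real.arctan (1 / 239) with hh
  have hR239 : (239 : ℝ) ^ 2 + 1 = 57122 := by norm_num
  have hc : Real.cos h * √57122 = 239 := hR239 ▸ cos_arctan_inv_mul_sqrt (x := 239) (by norm_num)
  have hs : Real.sin h * √57122 = 1 := hR239 ▸ sin_arctan_inv_mul_sqrt (x := 239) (by norm_num)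
  have hκ : Complex.exp (h / 4 * Complex.I) =
      (Real.cos (h / 4) : ℂ) + Real.sin (h / 4) * Complex.I := by
    rw [Complex.exp_mul_I]; push_cast; rfl
  induction r using Nat.twoStepInduction with
  | zero =>
    rw [padeForm_zero, padeError_zero, hκ]
    simp [-Complex.ofReal_cos, -Complex.ofReal_sin]
    ring
  | one =>
    have h1 := padeError_one h
    rw [padeError_zero] at h1
    rw [padeForm_one, hκ]
    simp [-Complex.ofReal_cos, -Complex.ofReal_sin]
    linear_combination (16 / 15 * √57122) * h1 + (64 / 15 * Real.cos (h / 4)) * hs -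
      (256 / 15 * Real.sin (h / 4)) * hc
  | more n ih0 ih1 =>
    have hJ := padeError_recurrence h n
    have hP := im_mul_padeForm_recurrence (Complex.exp (h / 4 * Complex.I)) n
    set A := fun n => (Complex.exp (h / 4 * Complex.I) *
      padeForm n (239 + Complex.I) (239 - Complex.I)).im
    change A n * _ = _ at ih0
    change A (n + 1) * _ = _ at ih1
    change A (n + 2) * _ = _
    change _ * A (n + 2) = _ * A n + _ * A (n + 1) at hP
    have hne : ((n : ℝ) + 2) ^ 2 - 1 / 16 ≠ 0 := by
      have : (0 : ℝ) ≤ n := n.cast_nonneg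
      nlinarith
    have hs2 : Real.sin h ^ 2 * √57122 ^ 2 = 1 := by rw [← mul_pow, hs, one_pow]
    rw [Nat.factorial_succ, Nat.factorial_succ]
    rw [Nat.factorial_succ] at ih1
    push_cast at ih1 ⊢
    apply mul_left_cancel₀ hne
    linear_combination (2 * (n + 2) * (n + 1) * (n ! : ℝ) ^ 2) * hP +
      4 * (n + 2) * (n + 1) * ih0 + 478 * (n + 2) * (2 * n + 3) * ih1 -
      ((-√57122) ^ (n + 2)) * hJ -
      4 * (n + 2) * (n + 1) * (-√57122) ^ n * padeError h n * hs2 -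
      2 * (n + 2) * (2 * n + 3) * (-√57122) ^ (n + 1) * padeError h (n + 1) * hc

lemma abs_exp_mul_padeForm_im_le (r : ℕ) :
    |(Complex.exp (Real.arctan (1 / 239) / 4 * Complex.I) *
        (padeScale r * padeForm r (239 + Complex.I) (239 - Complex.I))).im| ≤
      1 / 956 * (8 / 239) ^ r := by
  have hid := exp_mul_padeForm_im r
  set h := Real.arctan (1 / 239) with hh
  set A := (Complex.exp (h / 4 * Complex.I) *
    padeForm r (239 + Complex.I) (239 - Complex.I)).im
  have h0 : 0 ≤ h := Real.arctan_nonneg.mpr (by norm_num)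
  have hle : h ≤ 1 / 239 := arctan_le_self (by norm_num)
  have hπ : h ≤ Real.pi := by linarith [Real.pi_gt_three]
  have hR239 : (239 : ℝ) ^ 2 + 1 = 57122 := by norm_num
  have hc : Real.cos h * √57122 = 239 := hR239 ▸ cos_arctan_inv_mul_sqrt (x := 239) (by norm_num)
  have hRpos : 0 ≤ √57122 := Real.sqrt_nonneg _
  have hRle : √57122 ≤ 239 + 1 / 478 := Real.sqrt_le_iff.mpr ⟨by norm_num, by norm_num⟩
  have hbase : √57122 * (2 - 2 * Real.cos h) ≤ 1 / 239 := by linarith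
  have hbase0 : 0 ≤ √57122 * (2 - 2 * Real.cos h) :=
    mul_nonneg hRpos (by linarith [Real.cos_le_one h])
  have hfac : (0 : ℝ) < (r ! : ℝ) ^ 2 := by positivity
  have hA : |A| * (r ! : ℝ) ^ 2 ≤ (1 / 239) ^ r * (1 / 239) := by
    have h1 : |A| * (2 * (r ! : ℝ) ^ 2) = √57122 ^ r * |padeError h r| := by
      rw [← abs_of_pos (by positivity : 0 < 2 * (r ! : ℝ) ^ 2), ← abs_mul, hid, abs_mul, abs_pow,
        abs_neg, abs_of_nonneg hRpos]
    have h2 : √57122 ^ r * |padeError h r| ≤ (1 / 239) ^ r * (2 * (1 / 239)) := by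
      calc _ ≤ √57122 ^ r * ((2 - 2 * Real.cos h) ^ r * (2 * h)) := by
            gcongr
            exact abs_padeError_le h0 hπ r
        _ = (√57122 * (2 - 2 * Real.cos h)) ^ r * (2 * h) := by rw [mul_pow]; ring
        _ ≤ _ := by gcongr
    linarith
  rw [mul_left_comm, Complex.im_ofReal_mul, abs_mul, abs_of_pos (padeScale_pos r)]
  calc padeScale r * |A| ≤ 8 ^ r / 4 * (r ! : ℝ) ^ 2 * |A| := by
        gcongr
        exact padeScale_le r
    _ = 8 ^ r / 4 * (|A| * (r ! : ℝ) ^ 2) := by ring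
    _ ≤ 8 ^ r / 4 * ((1 / 239) ^ r * (1 / 239)) := by gcongr
    _ = _ := by rw [div_pow, div_pow, one_pow]; ring

lemma norm_exp_mul_I_sub_le (x y : ℝ) :
    ‖Complex.exp (x * Complex.I) - Complex.exp (y * Complex.I)‖ ≤ |x - y| := by
  have h : Complex.exp (x * Complex.I) - Complex.exp (y * Complex.I) =
      Complex.exp (y * Complex.I) * (Complex.exp (Complex.I * ((x - y : ℝ) : ℂ)) - 1) := by
    rw [mul_sub, ← Complex.exp_add]
    push_cast
    ring_nf
  rw [h, norm_mul, Complex.norm_exp_ofReal_mul_I, one_mul]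
  exact (Real.norm_exp_I_mul_ofReal_sub_one_le).trans_eq (Real.norm_eq_abs _)

lemma one_le_abs_im_of_mem {z : ℂ} (hz : z ∈ GaussianInt.toComplex.range) (h : z.im ≠ 0) :
    1 ≤ |z.im| := by
  obtain ⟨w, rfl⟩ := hz
  rw [GaussianInt.im_toComplex] at h ⊢
  rw [← Int.cast_abs]
  exact_mod_cast Int.one_le_abs (by exact_mod_cast h)

lemma mem_range_toComplex_of_eq {z : ℂ} (a b : ℤ) (h : z = a + b * Complex.I) :
    z ∈ GaussianInt.toComplex.range := ⟨⟨a, b⟩, by rw [h, GaussianInt.toComplex_def']⟩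

lemma one_le_norm_mul_of_im_ne_zero {γ : ℂ} (hγ : γ ∈ GaussianInt.toComplex.range) {ψ ε : ℝ}
    (hpolar : γ = ‖γ‖ * Complex.exp (ψ * Complex.I))
    (hψ : |ψ - Real.arctan (1 / 239) / 4| ≤ ε) (r : ℕ)
    (hne : (γ * padeForm r (239 + Complex.I) (239 - Complex.I)).im ≠ 0) :
    1 ≤ ‖γ‖ * (1 / 956 * (8 / 239) ^ r + ε * 7649 ^ r) := by
  have hu : (239 + Complex.I : ℂ) ∈ GaussianInt.toComplex.range :=
    mem_range_toComplex_of_eq 239 1 (by push_cast; ring)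
  have hv : (239 - Complex.I : ℂ) ∈ GaussianInt.toComplex.range :=
    mem_range_toComplex_of_eq 239 (-1) (by push_cast; ring)
  have hnu : ‖(239 + Complex.I : ℂ)‖ = √57122 := by
    rw [Complex.norm_def, Complex.normSq_apply]; norm_num
  have hnv : ‖(239 - Complex.I : ℂ)‖ = √57122 := by
    rw [Complex.norm_def, Complex.normSq_apply]; norm_num
  have hR : 32 * √57122 ≤ 7649 := by
    have : √57122 ≤ 7649 / 32 := Real.sqrt_le_iff.mpr (by norm_num)
    linarith
  set G : ℂ := padeScale r * padeForm r (239 + Complex.I) (239 - Complex.I) with hG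
  have hGn : ‖G‖ ≤ 7649 ^ r :=
    (norm_padeScale_mul_padeForm_le r hnu hnv).trans (pow_le_pow_left₀ (by positivity) hR r)
  have hval : 1 ≤ |(γ * G).im| := by
    refine one_le_abs_im_of_mem (mul_mem hγ (padeScale_mul_padeForm_mem r hu hv)) ?_
    rw [hG, mul_left_comm, Complex.im_ofReal_mul]
    exact mul_ne_zero (padeScale_pos r).ne' hne
  set κ : ℂ := Complex.exp (Real.arctan (1 / 239) / 4 * Complex.I) with hκ
  set κ' : ℂ := Complex.exp (ψ * Complex.I) with hκ'
  have hsub : ‖κ' - κ‖ ≤ ε := by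
    have := norm_exp_mul_I_sub_le ψ (Real.arctan (1 / 239) / 4)
    rw [show ((Real.arctan (1 / 239) / 4 : ℝ) : ℂ) = (Real.arctan (1 / 239) : ℂ) / 4 by
      push_cast; rfl] at this
    exact this.trans hψ
  have hsplit : (γ * G).im = ‖γ‖ * ((κ * G).im + ((κ' - κ) * G).im) := by
    rw [← Complex.add_im, ← add_mul, add_sub_cancel, ← Complex.im_ofReal_mul, ← mul_assoc (‖γ‖ : ℂ),
      ← hpolar]
  have hε : 0 ≤ ε := (norm_nonneg _).trans hsub
  refine hval.trans ?_
  rw [hsplit, abs_mul, abs_norm]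
  refine mul_le_mul_of_nonneg_left ((abs_add_le _ _).trans (add_le_add ?_ ?_)) (norm_nonneg _)
  · exact abs_exp_mul_padeForm_im_le r
  · refine (Complex.abs_im_le_norm _).trans ?_
    rw [norm_mul]
    exact mul_le_mul hsub hGn (norm_nonneg _) hε

lemma add_I_eq_sqrt_mul_exp {x : ℝ} (hx : 0 < x) :
    (x + Complex.I : ℂ) = √(x ^ 2 + 1) * Complex.exp (Real.arctan (1 / x) * Complex.I) := by
  rw [Complex.exp_mul_I, ← Complex.ofReal_cos, ← Complex.ofReal_sin, mul_add, ← mul_assoc,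
    ← Complex.ofReal_mul, ← Complex.ofReal_mul, mul_comm √_, mul_comm √_,
    cos_arctan_inv_mul_sqrt hx, sin_arctan_inv_mul_sqrt hx, Complex.ofReal_one, one_mul]

lemma sub_I_eq_sqrt_mul_exp {x : ℝ} (hx : 0 < x) :
    (x - Complex.I : ℂ) = √(x ^ 2 + 1) * Complex.exp (-Real.arctan (1 / x) * Complex.I) := by
  have h := congrArg (starRingEnd ℂ) (add_I_eq_sqrt_mul_exp hx)
  rwa [map_add, map_mul, ← Complex.exp_conj, map_mul, Complex.conj_I, Complex.conj_ofReal,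
    Complex.conj_ofReal, Complex.conj_ofReal, mul_neg, ← neg_mul, ← sub_eq_add_neg] at h

lemma exists_unit_multiple_eq_polar {z : ℂ} (hz : z ∈ GaussianInt.toComplex.range) {c ψ : ℝ}
    (hc : 0 ≤ c) (h : z ^ 4 = c * Complex.exp (4 * ψ * Complex.I)) :
    ∃ γ ∈ GaussianInt.toComplex.range, ‖γ‖ = ‖z‖ ∧ γ = ‖γ‖ * Complex.exp (ψ * Complex.I) := by
  have hI : Complex.I ∈ GaussianInt.toComplex.range :=
    mem_range_toComplex_of_eq 0 1 (by push_cast; ring)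
  have hnorm : ‖z‖ ^ 4 = c := by
    rw [← norm_pow, h, norm_mul, show (4 * ψ * Complex.I : ℂ) = ((4 * ψ : ℝ) : ℂ) * Complex.I by
      push_cast; ring, Complex.norm_exp_ofReal_mul_I, mul_one, Complex.norm_of_nonneg hc]
  set w : ℂ := ‖z‖ * Complex.exp (ψ * Complex.I) with hw
  have hwz : z ^ 4 = w ^ 4 := by
    rw [h, hw, mul_pow, ← Complex.exp_nat_mul, ← hnorm]
    push_cast
    ring_nf
  have hfac : (z - w) * (-z - w) * ((Complex.I * z - w) * (-(Complex.I * z) - w)) = 0 := by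
    linear_combination -hwz + (z ^ 4 - z ^ 2 * w ^ 2) * Complex.I_sq
  have key : ∀ u : ℂ, ‖u‖ = ‖z‖ → u ∈ GaussianInt.toComplex.range → u - w = 0 →
      ∃ γ ∈ GaussianInt.toComplex.range, ‖γ‖ = ‖z‖ ∧
        γ = ‖γ‖ * Complex.exp (ψ * Complex.I) := fun u hu hmem huw =>
    ⟨u, hmem, hu, by rw [hu]; exact sub_eq_zero.mp huw⟩
  rcases mul_eq_zero.mp hfac with h1 | h1 <;> rcases mul_eq_zero.mp h1 with h2 | h2
  · exact key _ rfl hz h2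
  · exact key _ (norm_neg z) (neg_mem hz) h2
  · exact key _ (by simp) (mul_mem hI hz) h2
  · exact key _ (by simp) (neg_mem (mul_mem hI hz)) h2

lemma exists_gaussian_near_of_pow_four {z : ℂ} (hz : z ∈ GaussianInt.toComplex.range) {c x : ℝ}
    (hc : 0 ≤ c) (hx : 0 < x) (h : z ^ 4 = c * (x + Complex.I) * (239 + Complex.I) ∨
      z ^ 4 = c * (x - Complex.I) * (239 + Complex.I)) :
    ∃ γ ∈ GaussianInt.toComplex.range, ‖γ‖ = ‖z‖ ∧ ∃ ψ : ℝ,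
      γ = ‖γ‖ * Complex.exp (ψ * Complex.I) ∧ |ψ - Real.arctan (1 / 239) / 4| ≤ 1 / (4 * x) := by
  have h239 := add_I_eq_sqrt_mul_exp (x := 239) (by norm_num)
  rw [Complex.ofReal_ofNat] at h239
  have hatan : Real.arctan (1 / x) / 4 ≤ 1 / (4 * x) := by
    have := arctan_le_self (x := 1 / x) (by positivity)
    rw [mul_comm, ← div_div]
    linarith
  have hpos : 0 ≤ Real.arctan (1 / x) / 4 := by
    have := Real.arctan_nonneg.mpr (show 0 ≤ 1 / x by positivity)
    linarith
  rcases h with h | h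
  · rw [h239, add_I_eq_sqrt_mul_exp hx] at h
    obtain ⟨γ, hγ, hn, hp⟩ := exists_unit_multiple_eq_polar hz
      (c := c * √(x ^ 2 + 1) * √(239 ^ 2 + 1))
      (ψ := Real.arctan (1 / 239) / 4 + Real.arctan (1 / x) / 4) (by positivity) (by
        rw [h]
        generalize Real.arctan (1 / 239) = θ, Real.arctan (1 / x) = η
        push_cast
        rw [show 4 * ((θ : ℂ) / 4 + (η : ℂ) / 4) * Complex.I =
          η * Complex.I + θ * Complex.I by ring, Complex.exp_add]
        ring)
    refine ⟨γ, hγ, hn, _, hp, ?_⟩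
    rwa [add_sub_cancel_left, abs_of_nonneg hpos]
  · rw [h239, sub_I_eq_sqrt_mul_exp hx] at h
    obtain ⟨γ, hγ, hn, hp⟩ := exists_unit_multiple_eq_polar hz
      (c := c * √(x ^ 2 + 1) * √(239 ^ 2 + 1))
      (ψ := Real.arctan (1 / 239) / 4 - Real.arctan (1 / x) / 4) (by positivity) (by
        rw [h]
        generalize Real.arctan (1 / 239) = θ, Real.arctan (1 / x) = η
        push_cast
        rw [show 4 * ((θ : ℂ) / 4 - (η : ℂ) / 4) * Complex.I =
          -η * Complex.I + θ * Complex.I by ring, Complex.exp_add]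
        ring)
    refine ⟨γ, hγ, hn, _, hp, ?_⟩
    rwa [sub_sub_cancel_left, abs_neg, abs_of_nonneg hpos]

/-- The binary quartic form `Im ((1 + i) (a + b i) ^ 4)`. -/
def quarticForm (a b : ℤ) : ℤ := a ^ 4 + 4 * a ^ 3 * b - 6 * a ^ 2 * b ^ 2 - 4 * a * b ^ 3 + b ^ 4

lemma sq_add_sq_pos_of_quarticForm {a b : ℤ} (h : quarticForm a b = 1 ∨ quarticForm a b = -1) :
    0 < a ^ 2 + b ^ 2 := by
  by_contra! hle
  have ha : a = 0 := by nlinarith [sq_nonneg a, sq_nonneg b]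
  have hb : b = 0 := by nlinarith [sq_nonneg a, sq_nonneg b]
  subst ha hb
  simp [quarticForm] at h

lemma exists_gaussian_near {a b : ℤ} (h : quarticForm a b = 1 ∨ quarticForm a b = -1) :
    ∃ γ ∈ GaussianInt.toComplex.range, γ ≠ 0 ∧ ‖γ‖ ^ 2 ≤ 26 * (a ^ 2 + b ^ 2) ∧ ∃ ψ : ℝ,
      γ = ‖γ‖ * Complex.exp (ψ * Complex.I) ∧
      |ψ - Real.arctan (1 / 239) / 4| ≤ 1 / (4 * (a ^ 2 + b ^ 2) ^ 2) := by
  obtain ⟨X, hX⟩ : ∃ X : ℤ, X = a ^ 4 - 4 * a ^ 3 * b - 6 * a ^ 2 * b ^ 2 + 4 * a * b ^ 3 + b ^ 4 :=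
    ⟨_, rfl⟩
  obtain ⟨s, hs⟩ : ∃ s : ℤ, s = quarticForm a b := ⟨_, rfl⟩
  have hs2 : s ^ 2 = 1 := by rcases h with h | h <;> rw [hs, h] <;> norm_num
  have hN : 0 < a ^ 2 + b ^ 2 := sq_add_sq_pos_of_quarticForm h
  have hX2 : X ^ 2 + 1 = 2 * (a ^ 2 + b ^ 2) ^ 4 := by
    rw [← hs2, hs, hX, quarticForm]; ring
  have hXabs : (a ^ 2 + b ^ 2) ^ 2 ≤ |X| := by
    have hN4 : 1 ≤ (a ^ 2 + b ^ 2) ^ 4 := one_le_pow₀ hN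
    have := sq_le_sq.mp (show ((a ^ 2 + b ^ 2) ^ 2) ^ 2 ≤ X ^ 2 by linarith)
    rwa [abs_of_pos (by positivity)] at this
  have hX0 : X ≠ 0 := by
    rintro rfl
    have : 0 < (a ^ 2 + b ^ 2) ^ 2 := by positivity
    rw [abs_zero] at hXabs
    linarith
  have hα4 : (1 + Complex.I) * (a + b * Complex.I) ^ 4 = X + s * Complex.I := by
    rw [hs, hX, quarticForm]
    push_cast
    linear_combination (4 * a ^ 3 * b + 6 * a ^ 2 * b ^ 2 * (1 + Complex.I)
      + 4 * a * b ^ 3 * (Complex.I + Complex.I ^ 2 - 1)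
      + b ^ 4 * (Complex.I ^ 2 - 1) * (1 + Complex.I)) * Complex.I_sq
  have hβ4 : (1 - Complex.I) * (3 - 2 * Complex.I) ^ 4 = -(239 + Complex.I) := by
    linear_combination (-16 * Complex.I ^ 3 + 112 * Complex.I ^ 2 - 296 * Complex.I + 320) *
      Complex.I_sq
  have hII : (1 + Complex.I) * (1 - Complex.I) = 2 := by linear_combination -Complex.I_sq
  have hα : (a + b * Complex.I : ℂ) ∈ GaussianInt.toComplex.range :=
    mem_range_toComplex_of_eq a b rfl
  have hβ : (3 - 2 * Complex.I : ℂ) ∈ GaussianInt.toComplex.range :=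
    mem_range_toComplex_of_eq 3 (-2) (by push_cast; ring)
  have hρ : (1 + Complex.I : ℂ) ∈ GaussianInt.toComplex.range :=
    mem_range_toComplex_of_eq 1 1 (by push_cast; ring)
  have hnα : ‖(a + b * Complex.I : ℂ)‖ ^ 2 = a ^ 2 + b ^ 2 := by
    rw [Complex.sq_norm, Complex.normSq_apply]; simp; ring
  have hnβ : ‖(3 - 2 * Complex.I : ℂ)‖ ^ 2 = 13 := by
    rw [Complex.sq_norm, Complex.normSq_apply]; norm_num
  have hnρ : ‖(1 + Complex.I : ℂ)‖ ^ 2 = 2 := by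
    rw [Complex.sq_norm, Complex.normSq_apply]; norm_num
  have hNR : (0 : ℝ) < a ^ 2 + b ^ 2 := by exact_mod_cast hN
  have hXR : ((a : ℝ) ^ 2 + b ^ 2) ^ 2 ≤ |(X : ℝ)| := by exact_mod_cast hXabs
  obtain ⟨z, c, hz, hc, hzn, hzu, hz4⟩ : ∃ (z : ℂ) (c : ℝ), z ∈ GaussianInt.toComplex.range ∧
      0 ≤ c ∧ 0 < ‖z‖ ^ 2 ∧ ‖z‖ ^ 2 ≤ 26 * (a ^ 2 + b ^ 2) ∧
      (z ^ 4 = c * (|(X : ℝ)| + Complex.I) * (239 + Complex.I) ∨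
        z ^ 4 = c * (|(X : ℝ)| - Complex.I) * (239 + Complex.I)) := by
    have hs' : s = 1 ∨ s = -1 := hs ▸ h
    rcases lt_or_gt_of_ne hX0 with hneg | hpos
    · have hp : ((a + b * Complex.I) * (3 - 2 * Complex.I)) ^ 4 =
          1 / 2 * (-X - s * Complex.I) * (239 + Complex.I) := by
        linear_combination (1 / 2) * (X + s * Complex.I) * hβ4 +
          (1 / 2) * (1 - Complex.I) * (3 - 2 * Complex.I) ^ 4 * hα4 -
          (1 / 2) * ((a + b * Complex.I) * (3 - 2 * Complex.I)) ^ 4 * hII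
      have hn : ‖(a + b * Complex.I) * (3 - 2 * Complex.I)‖ ^ 2 = 13 * ((a : ℝ) ^ 2 + b ^ 2) := by
        rw [norm_mul, mul_pow, hnα, hnβ, mul_comm]
      have hXn : ((|(X : ℝ)| : ℝ) : ℂ) = -X := by
        rw [abs_of_neg (by exact_mod_cast hneg)]; push_cast; rfl
      refine ⟨_, 1 / 2, mul_mem hα hβ, by norm_num, by rw [hn]; positivity, by rw [hn]; linarith, ?_⟩
      rw [hp, hXn]
      rcases hs' with rfl | rfl
      · right; push_cast; ring
      · left; push_cast; ring
    · have hp : ((1 + Complex.I) * ((a + b * Complex.I) * (3 - 2 * Complex.I))) ^ 4 =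
          2 * (X + s * Complex.I) * (239 + Complex.I) := by
        have h4 : (1 + Complex.I) ^ 4 = -4 := by
          linear_combination (Complex.I ^ 2 + 4 * Complex.I + 5) * Complex.I_sq
        rw [mul_pow, h4]
        linear_combination -2 * (X + s * Complex.I) * hβ4 -
          2 * (1 - Complex.I) * (3 - 2 * Complex.I) ^ 4 * hα4 +
          2 * ((a + b * Complex.I) * (3 - 2 * Complex.I)) ^ 4 * hII
      have hn : ‖(1 + Complex.I) * ((a + b * Complex.I) * (3 - 2 * Complex.I))‖ ^ 2 =
          26 * ((a : ℝ) ^ 2 + b ^ 2) := by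
        rw [norm_mul, norm_mul, mul_pow, mul_pow, hnα, hnβ, hnρ]; ring
      have hXn : ((|(X : ℝ)| : ℝ) : ℂ) = X := by
        rw [abs_of_pos (by exact_mod_cast hpos)]; push_cast; rfl
      refine ⟨_, 2, mul_mem hρ (mul_mem hα hβ), by norm_num, by rw [hn]; positivity, hn.le, ?_⟩
      rw [hp, hXn]
      rcases hs' with rfl | rfl
      · left; push_cast; ring
      · right; push_cast; ring
  obtain ⟨γ, hγ, hn, ψ, hp, hψ⟩ := exists_gaussian_near_of_pow_four hz hc
    ((show 0 < ((a : ℝ) ^ 2 + b ^ 2) ^ 2 by positivity).trans_le hXR) hz4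
  refine ⟨γ, hγ, ?_, by rwa [hn], ψ, hp, hψ.trans ?_⟩
  · rintro rfl
    rw [← hn, norm_zero] at hzn
    norm_num at hzn
  · gcongr

lemma mul_pow_le_of_padeBound {A : ℝ} (hA : 1 ≤ A)
    (h : ∀ n : ℕ, ∃ r, n ≤ r ∧ r ≤ n + 1 ∧
      1 ≤ 5.1 * A * (1 / 956 * (8 / 239) ^ r + 1 / (4 * A ^ 4) * 7649 ^ r)) :
    A * (8 / 239) ^ 5 ≤ 93 := by
  have hA0 : 0 < A := by linarith
  have step : ∀ n : ℕ, 5 ≤ n → A * (8 / 239) ^ (n + 1) ≤ 93 → A * (8 / 239) ^ n ≤ 93 := by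
    intro n hn hle
    by_contra! hlt
    obtain ⟨r, hr, hr', hb⟩ := h (n + 1)
    have h1 : A * (8 / 239) ^ r ≤ 93 := le_trans
      (mul_le_mul_of_nonneg_left (pow_le_pow_of_le_one (by norm_num) (by norm_num) hr) hA0.le) hle
    have h2 : (7649 : ℝ) ^ r ≤ 7649 ^ (n + 2) := pow_le_pow_right₀ (by norm_num) hr'
    have h3 : 1 ≤ 5.1 / 956 * (A * (8 / 239) ^ r) + 5.1 / 4 * 7649 ^ r / A ^ 3 := by
      refine hb.trans_eq ?_
      field_simp
    have h4 : A ^ 3 ≤ 2.6 * 7649 ^ (n + 2) := by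
      have h5 : 0.5 ≤ 5.1 / 4 * 7649 ^ r / A ^ 3 := by linarith
      rw [le_div_iff₀ (by positivity)] at h5
      have h6 : (0 : ℝ) < 7649 ^ (n + 2) := by positivity
      rw [show 5.1 / 4 = (1.275 : ℝ) by norm_num] at h5
      linarith
    have h5 : (93 : ℝ) ^ 3 ≤ (A * (8 / 239) ^ n) ^ 3 :=
      pow_le_pow_left₀ (by norm_num) hlt.le 3
    have h6 : (A * (8 / 239) ^ n) ^ 3 ≤ 2.6 * 7649 ^ 2 * (7649 * (8 / 239) ^ 3) ^ n := by
      calc (A * (8 / 239) ^ n) ^ 3 = A ^ 3 * ((8 / 239) ^ n) ^ 3 := mul_pow _ _ _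
        _ ≤ 2.6 * 7649 ^ (n + 2) * ((8 / 239) ^ n) ^ 3 := by gcongr
        _ = _ := by rw [mul_pow, pow_add, ← pow_mul, ← pow_mul, mul_comm n 3]; ring
    have h7 : ((7649 : ℝ) * (8 / 239) ^ 3) ^ n ≤ (7649 * (8 / 239) ^ 3) ^ 5 :=
      pow_le_pow_of_le_one (by norm_num) (by norm_num) hn
    norm_num at h5 h6 h7
    linarith
  have descend : ∀ n : ℕ, 5 ≤ n → A * (8 / 239) ^ n ≤ 93 → A * (8 / 239) ^ 5 ≤ 93 := by
    intro n hn
    induction n, hn using Nat.le_induction with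
    | base => exact id
    | succ n hn ih => exact fun hle => ih (step n hn hle)
  obtain ⟨n, hn⟩ := exists_pow_lt_of_lt_one (show 0 < 93 / A by positivity)
    (show (8 / 239 : ℝ) < 1 by norm_num)
  refine descend (max 5 n) (le_max_left _ _) ?_
  have h1 : (8 / 239 : ℝ) ^ max 5 n ≤ 93 / A :=
    (pow_le_pow_of_le_one (by norm_num) (by norm_num) (le_max_right _ _)).trans hn.le
  rwa [le_div_iff₀ hA0, mul_comm] at h1

lemma sq_add_sq_sq_le_of_quarticForm {a b : ℤ}
    (h : quarticForm a b = 1 ∨ quarticForm a b = -1) : (a ^ 2 + b ^ 2) ^ 2 ≤ 10 ^ 40 := by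
  have hNR : (1 : ℝ) ≤ a ^ 2 + b ^ 2 := by
    exact_mod_cast sq_add_sq_pos_of_quarticForm h
  set A : ℝ := √(a ^ 2 + b ^ 2)
  have hAsq : A ^ 2 = a ^ 2 + b ^ 2 := Real.sq_sqrt (by positivity)
  have hA : 1 ≤ A := Real.one_le_sqrt.mpr hNR
  obtain ⟨γ, hγ, hγ0, hn, ψ, hp, hψ⟩ := exists_gaussian_near h
  rw [← hAsq, show (A ^ 2) ^ 2 = A ^ 4 by ring] at hψ
  rw [← hAsq] at hn
  have hγn : ‖γ‖ ≤ 5.1 * A := by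
    refine le_of_sq_le_sq ?_ (by positivity)
    nlinarith
  have hbound := mul_pow_le_of_padeBound hA fun n => by
    have key : ∀ r : ℕ, (γ * padeForm r (239 + Complex.I) (239 - Complex.I)).im ≠ 0 →
        1 ≤ 5.1 * A * (1 / 956 * (8 / 239) ^ r + 1 / (4 * A ^ 4) * 7649 ^ r) := fun r hr =>
      (one_le_norm_mul_of_im_ne_zero hγ hp hψ r hr).trans
        (mul_le_mul_of_nonneg_right hγn (by positivity))
    rcases exists_im_mul_padeForm_ne_zero hγ0 n with hne | hne
    · exact ⟨n, le_rfl, n.le_succ, key n hne⟩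
    · exact ⟨n + 1, n.le_succ, le_rfl, key _ hne⟩
  have hA10 : A ≤ 10 ^ 10 := by
    norm_num at hbound
    linarith
  have : ((a : ℝ) ^ 2 + b ^ 2) ^ 2 ≤ 10 ^ 40 := by
    rw [← hAsq, ← pow_mul]
    exact (pow_le_pow_left₀ (by positivity) hA10 4).trans (by norm_num)
  exact_mod_cast this

/-- The pairs `(xₙ, tₙ)` with `x₀ = t₀ = 1`, `xₙ₊₁ = 3 xₙ + 4 tₙ`, `tₙ₊₁ = 2 xₙ + 3 tₙ`. -/
def pellPair : ℕ → ℕ × ℕ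
  | 0 => (1, 1)
  | n + 1 => (3 * (pellPair n).1 + 4 * (pellPair n).2, 2 * (pellPair n).1 + 3 * (pellPair n).2)

lemma pellPair_fst_sq (n : ℕ) : (pellPair n).1 ^ 2 + 1 = 2 * (pellPair n).2 ^ 2 := by
  induction n with
  | zero => rfl
  | succ n ih => simp only [pellPair]; linarith

lemma pellPair_snd_le_fst (n : ℕ) : (pellPair n).2 ≤ (pellPair n).1 := by
  cases n with
  | zero => rfl
  | succ n => simp only [pellPair]; lia

lemma five_pow_le_pellPair_snd (n : ℕ) : 5 ^ n ≤ (pellPair n).2 := by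
  induction n with
  | zero => rfl
  | succ n ih =>
    have := pellPair_snd_le_fst n
    simp only [pellPair, pow_succ]
    lia

set_option maxRecDepth 4000 in
lemma eq_zero_or_eq_three_of_isSquare_pellPair_snd {n : ℕ} (hn : n < 58)
    (h : IsSquare (pellPair n).2) : n = 0 ∨ n = 3 := by
  contrapose! h
  interval_cases n <;> norm_num at h
  all_goals norm_num [pellPair]

/-- A solution of `x ^ 2 + 1 = 2 m ^ 4` comes from a representation of `1` or `-1` by
`quarticForm`. -/
lemma exists_quarticForm_of_sq_add_one {x m : ℤ} (h : x ^ 2 + 1 = 2 * (m ^ 2) ^ 2) :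
    ∃ a b : ℤ, (quarticForm a b = 1 ∨ quarticForm a b = -1) ∧ m ^ 2 = (a ^ 2 + b ^ 2) ^ 2 := by
  obtain ⟨c, rfl⟩ : Odd x := by
    have : Odd (x ^ 2) := ⟨(m ^ 2) ^ 2 - 1, by linarith⟩
    exact (Int.odd_pow' two_ne_zero).mp this
  have htriple : PythagoreanTriple c (c + 1) (m ^ 2) := by
    unfold PythagoreanTriple
    linarith
  obtain ⟨k, l, hkl, hm, hgcd, -⟩ := PythagoreanTriple.coprime_classification.mp
    ⟨htriple, Int.isCoprime_iff_gcd_eq_one.mp ⟨-1, 1, by ring⟩⟩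
  have hm' : m ^ 2 = k ^ 2 + l ^ 2 := by
    rcases hm with hm | hm
    · exact hm
    · nlinarith [sq_nonneg m, sq_nonneg k, sq_nonneg l]
  have hunit : k ^ 2 - l ^ 2 - 2 * k * l = 1 ∨ k ^ 2 - l ^ 2 - 2 * k * l = -1 := by
    rcases hkl with ⟨h1, h2⟩ | ⟨h1, h2⟩
    · right; linarith
    · left; linarith
  have htriple' : PythagoreanTriple k l m := by
    unfold PythagoreanTriple
    linarith
  obtain ⟨a, b, hab, hmab, -, -⟩ := PythagoreanTriple.coprime_classification.mp ⟨htriple', hgcd⟩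
  have hmsq : m ^ 2 = (a ^ 2 + b ^ 2) ^ 2 := by
    rcases hmab with rfl | rfl <;> ring
  rcases hab with ⟨rfl, rfl⟩ | ⟨rfl, rfl⟩
  · refine ⟨a, -b, ?_, by rw [hmsq]; ring⟩
    unfold quarticForm
    rcases hunit with hu | hu
    · left; linarith
    · right; linarith
  · refine ⟨a, b, ?_, hmsq⟩
    unfold quarticForm
    rcases hunit with hu | hu
    · right; linarith
    · left; linarith

theorem stmt_6 (x t : ℕ → ℤ) (hx0 : x 0 = 1) (ht0 : t 0 = 1)
    (hx : ∀ n, x (n + 1) = 3 * x n + 4 * t n)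
    (ht : ∀ n, t (n + 1) = 2 * x n + 3 * t n) :
    ∀ n : ℕ, (∃ m : ℤ, t n = m ^ 2) ↔ (n = 0 ∨ n = 3) := by
  have hpair : ∀ n, x n = (pellPair n).1 ∧ t n = (pellPair n).2 := by
    intro n
    induction n with
    | zero => exact ⟨hx0, ht0⟩
    | succ n ih =>
      rw [hx, ht, ih.1, ih.2]
      exact ⟨by simp [pellPair], by simp [pellPair]⟩
  intro n
  constructor
  · rintro ⟨m, hm⟩
    have hsq : x n ^ 2 + 1 = 2 * (m ^ 2) ^ 2 := by
      rw [← hm, (hpair n).1, (hpair n).2]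
      exact_mod_cast pellPair_fst_sq n
    obtain ⟨a, b, hab, hmab⟩ := exists_quarticForm_of_sq_add_one hsq
    have hle : (5 : ℤ) ^ n ≤ 10 ^ 40 := by
      have h5 : (5 : ℤ) ^ n ≤ t n := by
        rw [(hpair n).2]
        exact_mod_cast five_pow_le_pellPair_snd n
      rw [hm, hmab] at h5
      exact h5.trans (sq_add_sq_sq_le_of_quarticForm hab)
    have hn : n < 58 :=
      (pow_lt_pow_iff_right₀ (show (1 : ℤ) < 5 by norm_num)).mp (hle.trans_lt (by norm_num))
    refine eq_zero_or_eq_three_of_isSquare_pellPair_snd hn ⟨m.natAbs, ?_⟩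
    have h1 := (hpair n).2
    rw [hm] at h1
    zify
    rw [← h1, ← abs_mul, abs_mul_self, sq]
  · rintro (rfl | rfl)
    · exact ⟨1, by rw [ht0]; norm_num⟩
    · exact ⟨13, by rw [(hpair 3).2]; rfl⟩
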